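/- arXiv:1712.03937 — 3 statements merged into one kernel-verified Lean document; each statement's English description precedes it below -/
import Mathlib

section
/- Let K and H be convex bodies in ℝ^d such that L_K(s) = L_H(s) for all real s > 0. Then the Lebesgue volume of the pseudopyramid of K equals the Lebesgue volume of the pseudopyramid of H, i.e. vol(ppyr K) = vol(ppyr H). -/
open Set MeasureTheory
open scoped Pointwise

/-- The set of integer lattice points in `ℝ^d`. -/
def latticePts (d : ℕ) : Set (EuclideanSpace ℝ (Fin d)) :=
  {x | ∀ i, ∃ n : ℤ, x i = (n : ℝ)}

/-- The real Ehrhart function `L_K(s) = #(sK ∩ ℤ^d)`. -/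
noncomputable def ehrhart (d : ℕ) (K : Set (EuclideanSpace ℝ (Fin d))) (s : ℝ) : ℕ :=
  (s • K ∩ latticePts d).ncard

/-- The pseudopyramid of `K`: the union of the dilates `λK` for `λ ∈ [0, 1]`. -/
def ppyr (d : ℕ) (K : Set (EuclideanSpace ℝ (Fin d))) : Set (EuclideanSpace ℝ (Fin d)) :=
  ⋃ l ∈ Set.Icc (0 : ℝ) 1, l • K

open Filter Topology

/-- Number of lattice points in the dilated pseudopyramid. -/
noncomputable def ppCount (d : ℕ) (K : Set (EuclideanSpace ℝ (Fin d))) (s : ℝ) : ℕ :=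
  (s • ppyr d K ∩ latticePts d).ncard

section aux
variable {d : ℕ} {K : Set (EuclideanSpace ℝ (Fin d))}

lemma mem_smul_ppyr {s : ℝ} (hs : 0 < s) {x : EuclideanSpace ℝ (Fin d)} :
    x ∈ s • ppyr d K ↔ ∃ r, 0 ≤ r ∧ r ≤ s ∧ x ∈ r • K := by
  simp only [ppyr, Set.mem_smul_set, Set.mem_iUnion, Set.mem_Icc]
  constructor
  · rintro ⟨y, ⟨l, ⟨h0, h1⟩, k, hk, rfl⟩, rfl⟩
    exact ⟨s * l, by positivity, by nlinarith, k, hk, by rw [mul_smul]⟩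
  · rintro ⟨r, h0, h1, k, hk, rfl⟩
    refine ⟨(r / s) • k, ⟨r / s, ⟨by positivity, (div_le_one hs).2 h1⟩, k, hk, rfl⟩, ?_⟩
    rw [smul_smul, mul_div_cancel₀ _ hs.ne']

lemma smul_ppyr_mono {s t : ℝ} (hs : 0 < s) (hst : s ≤ t) :
    s • ppyr d K ⊆ t • ppyr d K := by
  intro x hx
  obtain ⟨r, h0, h1, h2⟩ := (mem_smul_ppyr hs).1 hx
  exact (mem_smul_ppyr (hs.trans_le hst)).2 ⟨r, h0, h1.trans hst, h2⟩

lemma smul_subset_smul_ppyr {s : ℝ} (hs : 0 < s) : s • K ⊆ s • ppyr d K := fun _ hx =>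
  (mem_smul_ppyr hs).2 ⟨s, hs.le, le_rfl, hx⟩

lemma isCompact_ppyr (hK : IsCompact K) : IsCompact (ppyr d K) := by
  have : ppyr d K = (fun p : ℝ × EuclideanSpace ℝ (Fin d) => p.1 • p.2) '' (Icc (0:ℝ) 1 ×ˢ K) := by
    ext x
    simp only [ppyr, Set.mem_smul_set, Set.mem_iUnion, Set.mem_image, Set.mem_prod, Prod.exists]
    constructor
    · rintro ⟨l, hl, k, hk, rfl⟩; exact ⟨l, k, ⟨hl, hk⟩, rfl⟩
    · rintro ⟨l, k, ⟨hl, hk⟩, rfl⟩; exact ⟨l, hl, k, hk, rfl⟩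
  rw [this]
  exact (isCompact_Icc.prod hK).image (by fun_prop)

lemma smul_mem_combo (hK : Convex ℝ K) {p q : ℝ} (hp : 0 ≤ p) (hq : 0 ≤ q)
    {x y : EuclideanSpace ℝ (Fin d)} (hx : x ∈ p • K) (hy : y ∈ q • K) :
    x + y ∈ (p + q) • K := by
  rw [hK.add_smul hp hq]
  exact Set.add_mem_add hx hy

lemma convex_ppyr (hK : Convex ℝ K) : Convex ℝ (ppyr d K) := by
  intro x hx y hy a b ha hb hab
  simp only [ppyr, Set.mem_iUnion, Set.mem_Icc] at hx hy ⊢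
  obtain ⟨p, ⟨hp0, hp1⟩, hx⟩ := hx
  obtain ⟨q, ⟨hq0, hq1⟩, hy⟩ := hy
  refine ⟨a * p + b * q, ⟨by positivity, by nlinarith⟩, ?_⟩
  apply smul_mem_combo hK (by positivity) (by positivity)
  · rw [mul_smul]; exact Set.smul_mem_smul_set hx
  · rw [mul_smul]; exact Set.smul_mem_smul_set hy

/-- if `x ∈ rK ∩ tK` then `x ∈ sK` for `r ≤ s ≤ t`. -/
lemma mem_smul_between (hK : Convex ℝ K) {r s t : ℝ} (h0 : 0 ≤ r) (hrs : r ≤ s) (hst : s < t)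
    {x : EuclideanSpace ℝ (Fin d)} (hr : x ∈ r • K) (ht : x ∈ t • K) : x ∈ s • K := by
  have h1 : 0 < t - r := by linarith
  have e : s = ((t - s) / (t - r)) * r + ((s - r) / (t - r)) * t := by field_simp; ring
  have e' : x = ((t - s) / (t - r)) • x + ((s - r) / (t - r)) • x := by
    rw [← add_smul, ← add_div, show t - s + (s - r) = t - r by ring, div_self h1.ne', one_smul]
  have a1 : 0 ≤ (t - s) / (t - r) := div_nonneg (by linarith) h1.le
  have a2 : 0 ≤ (s - r) / (t - r) := div_nonneg (by linarith) h1.le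
  rw [e, e']
  apply smul_mem_combo hK (by positivity) (mul_nonneg a2 (by linarith))
  · rw [mul_smul]; exact Set.smul_mem_smul_set hr
  · rw [mul_smul]; exact Set.smul_mem_smul_set ht

lemma eventually_notMem {C : Set (EuclideanSpace ℝ (Fin d))} (hC : IsClosed C) {t : ℝ} (ht : 0 < t)
    {x : EuclideanSpace ℝ (Fin d)} (hx : x ∉ t • C) : ∀ᶠ s in 𝓝 t, x ∉ s • C := by
  rw [Set.mem_smul_set_iff_inv_smul_mem₀ ht.ne'] at hx
  have hc : ContinuousAt (fun s : ℝ => s⁻¹ • x) t :=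
    (continuousAt_inv₀ ht.ne').smul continuousAt_const
  filter_upwards [hc.eventually (hC.isOpen_compl.eventually_mem hx), lt_mem_nhds ht] with s h1 h2
  rw [Set.mem_smul_set_iff_inv_smul_mem₀ h2.ne']
  exact h1

open Classical in
lemma point_left (hKc : IsCompact K) (hK : Convex ℝ K) (hne : K.Nonempty) {t : ℝ} (ht : 0 < t)
    (x : EuclideanSpace ℝ (Fin d)) : ∀ᶠ s in 𝓝[<] t,
      (if x ∈ t • ppyr d K then (1:ℤ) else 0) - (if x ∈ s • ppyr d K then 1 else 0)
       = (if x ∈ t • K then 1 else 0) - (if x ∈ s • K then 1 else 0) := by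
  have hpos : ∀ᶠ s in 𝓝[<] t, 0 < s := nhdsWithin_le_nhds (lt_mem_nhds ht)
  by_cases h1 : ∃ r, 0 ≤ r ∧ r < t ∧ x ∈ r • K
  · obtain ⟨r, h0, hrt, hr⟩ := h1
    have hgt : ∀ᶠ s in 𝓝[<] t, r < s := nhdsWithin_le_nhds (lt_mem_nhds hrt)
    have hP : ∀ s, 0 < s → r < s → x ∈ s • ppyr d K := fun s hs hrs =>
      (mem_smul_ppyr hs).2 ⟨r, h0, hrs.le, hr⟩
    by_cases hxt : x ∈ t • K
    · filter_upwards [hpos, hgt, self_mem_nhdsWithin] with s hs hrs hst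
      rw [if_pos (hP t ht hrt), if_pos (hP s hs hrs), if_pos hxt,
        if_pos (mem_smul_between hK h0 hrs.le hst hr hxt)]
    · filter_upwards [hpos, hgt, nhdsWithin_le_nhds (eventually_notMem hKc.isClosed ht hxt)]
        with s hs hrs hst
      rw [if_pos (hP t ht hrt), if_pos (hP s hs hrs), if_neg hxt, if_neg hst]
      simp
  · push Not at h1
    filter_upwards [hpos, self_mem_nhdsWithin] with s hs hst
    have hst : s < t := hst
    have a1 : x ∉ s • K := h1 s hs.le hst
    have a2 : x ∉ s • ppyr d K := by
      rw [mem_smul_ppyr hs]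
      rintro ⟨r, b0, b1, b2⟩
      exact h1 r b0 (b1.trans_lt hst) b2
    have a3 : x ∈ t • ppyr d K ↔ x ∈ t • K := by
      constructor
      · rw [mem_smul_ppyr ht]
        rintro ⟨r, b0, b1, b2⟩
        rcases b1.lt_or_eq with h | rfl
        · exact absurd b2 (h1 r b0 h)
        · exact b2
      · exact fun h => smul_subset_smul_ppyr ht h
    simp only [a1, a2, a3]

open Classical in
lemma point_right (hKc : IsCompact K) {t : ℝ} (ht : 0 < t)
    (x : EuclideanSpace ℝ (Fin d)) : ∀ᶠ s in 𝓝[>] t,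
      (if x ∈ s • ppyr d K then (1:ℤ) else 0) = (if x ∈ t • ppyr d K then 1 else 0) := by
  by_cases h : x ∈ t • ppyr d K
  · filter_upwards [self_mem_nhdsWithin] with s hs
    rw [if_pos h, if_pos (smul_ppyr_mono ht (le_of_lt hs) h)]
  · filter_upwards [nhdsWithin_le_nhds (eventually_notMem (isCompact_ppyr hKc).isClosed ht h)]
      with s hs
    rw [if_neg h, if_neg hs]

lemma mem_lattice_iff (x : EuclideanSpace ℝ (Fin d)) :
    x ∈ latticePts d ↔
      WithLp.ofLp x ∈ (Submodule.span ℤ (Set.range (Pi.basisFun ℝ (Fin d))) : Set (Fin d → ℝ)) := by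
  rw [SetLike.mem_coe, Module.Basis.mem_span_iff_repr_mem]
  simp [latticePts, eq_comm]

lemma finite_lattice {A : Set (EuclideanSpace ℝ (Fin d))} (hA : IsCompact A) :
    (A ∩ latticePts d).Finite := by
  have hb : Bornology.IsBounded (WithLp.ofLp '' A) :=
    (hA.image (PiLp.continuous_ofLp 2 _)).isBounded
  have := ZSpan.setFinite_inter (Pi.basisFun ℝ (Fin d)) hb
  refine Set.Finite.of_finite_image (f := WithLp.ofLp) (this.subset ?_)
    (WithLp.ofLp_injective 2).injOn
  rintro _ ⟨x, ⟨hx, hl⟩, rfl⟩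
  exact ⟨⟨x, hx, rfl⟩, (mem_lattice_iff x).1 hl⟩

open Classical in
lemma ncard_eq_sum {A B : Set (EuclideanSpace ℝ (Fin d))} (hB : (B ∩ latticePts d).Finite)
    (hAB : A ⊆ B) : ((A ∩ latticePts d).ncard : ℤ) =
      ∑ x ∈ hB.toFinset, if x ∈ A then (1:ℤ) else 0 := by
  rw [Finset.sum_boole, ← Set.ncard_coe_finset]
  congr 2
  ext x
  simp only [Set.mem_inter_iff, Finset.coe_filter, Set.Finite.mem_toFinset, Set.mem_ofPred_eq]
  constructor
  · rintro ⟨a, b⟩; exact ⟨⟨hAB a, b⟩, a⟩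
  · rintro ⟨⟨a, b⟩, c⟩; exact ⟨c, b⟩

lemma count_left (hKc : IsCompact K) (hK : Convex ℝ K) (hne : K.Nonempty) {t : ℝ} (ht : 0 < t) :
    ∀ᶠ s in 𝓝[<] t, (ppCount d K t : ℤ) - ppCount d K s = ehrhart d K t - ehrhart d K s := by
  classical
  have hF := finite_lattice ((isCompact_ppyr hKc).smul t)
  have hev := (Filter.eventually_all_finset hF.toFinset).2
    (fun x _ => point_left hKc hK hne ht x)
  have hpos : ∀ᶠ s in 𝓝[<] t, 0 < s := nhdsWithin_le_nhds (lt_mem_nhds ht)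
  filter_upwards [hev, hpos, self_mem_nhdsWithin] with s hs h0 hst
  have hm := smul_ppyr_mono (K := K) h0 (le_of_lt hst)
  unfold ppCount ehrhart
  rw [ncard_eq_sum hF subset_rfl, ncard_eq_sum hF hm,
    ncard_eq_sum hF (smul_subset_smul_ppyr ht),
    ncard_eq_sum hF ((smul_subset_smul_ppyr h0).trans hm), ← Finset.sum_sub_distrib,
    ← Finset.sum_sub_distrib]
  exact Finset.sum_congr rfl hs

lemma count_right (hKc : IsCompact K) {t : ℝ} (ht : 0 < t) :
    ∀ᶠ s in 𝓝[>] t, (ppCount d K s : ℤ) = ppCount d K t := by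
  classical
  have ht1 : 0 < t + 1 := by linarith
  have hF := finite_lattice ((isCompact_ppyr hKc).smul (t + 1))
  have hev := (Filter.eventually_all_finset hF.toFinset).2
    (fun x _ => point_right hKc ht x)
  have hlt : ∀ᶠ s in 𝓝[>] t, s < t + 1 := nhdsWithin_le_nhds (gt_mem_nhds (by linarith))
  filter_upwards [hev, hlt, self_mem_nhdsWithin] with s hs h1 hst
  unfold ppCount
  rw [ncard_eq_sum hF (smul_ppyr_mono (ht.trans hst) h1.le),
    ncard_eq_sum hF (smul_ppyr_mono ht (by linarith))]
  exact Finset.sum_congr rfl hs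

lemma lattice_norm {x : EuclideanSpace ℝ (Fin d)} (hx : x ∈ latticePts d) (h1 : ‖x‖ < 1) :
    x = 0 := by
  ext i
  obtain ⟨n, hn⟩ := hx i
  have := (PiLp.norm_apply_le x i).trans_lt h1
  rw [hn, Real.norm_eq_abs, ← Int.cast_abs] at this
  have h2 : |n| < 1 := by exact_mod_cast this
  rw [Int.abs_lt_one_iff] at h2
  simp [hn, h2]

lemma count_zero (hKc : IsCompact K) (hne : K.Nonempty) :
    ∀ᶠ s in 𝓝[>] (0:ℝ), ppCount d K s = 1 := by
  obtain ⟨R, hR0, hR⟩ := (isCompact_ppyr hKc).isBounded.exists_pos_norm_le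
  have hlt : ∀ᶠ s in 𝓝[>] (0:ℝ), s < 1 / R := nhdsWithin_le_nhds (gt_mem_nhds (by positivity))
  filter_upwards [hlt, self_mem_nhdsWithin] with s h1 h0
  have h0 : 0 < s := h0
  unfold ppCount
  rw [Set.ncard_eq_one]
  refine ⟨0, ?_⟩
  ext x
  simp only [Set.mem_inter_iff, Set.mem_singleton_iff]
  constructor
  · rintro ⟨⟨y, hy, rfl⟩, hl⟩
    apply lattice_norm hl
    simp only [norm_smul, Real.norm_eq_abs, abs_of_pos h0]
    have := hR y hy
    rw [lt_div_iff₀ hR0] at h1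
    nlinarith
  · rintro rfl
    refine ⟨(mem_smul_ppyr h0).2 ⟨0, le_rfl, h0.le, ?_⟩, fun i => ⟨0, by simp⟩⟩
    obtain ⟨k, hk⟩ := hne
    exact ⟨k, hk, by simp⟩

lemma tendsto_count (hKc : IsCompact K) (hK : Convex ℝ K) :
    Tendsto (fun n : ℕ => (ppCount d K n : ℝ) / n ^ d) atTop
      (𝓝 (volume.real (ppyr d K))) := by
  have hc := isCompact_ppyr hKc
  set S : Set (Fin d → ℝ) := (WithLp.toLp 2) ⁻¹' ppyr d K with hS
  have hSim : S = WithLp.ofLp '' ppyr d K := by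
    ext x
    constructor
    · intro hx; exact ⟨_, hx, rfl⟩
    · rintro ⟨y, hy, rfl⟩; exact hy
  have hSc : IsCompact S := hSim ▸ hc.image (PiLp.continuous_ofLp 2 _)
  have hSconv : Convex ℝ S :=
    (convex_ppyr hK).linear_preimage (WithLp.linearEquiv 2 ℝ (Fin d → ℝ)).symm.toLinearMap
  have hvol : volume S = volume (ppyr d K) :=
    (PiLp.volume_preserving_toLp (Fin d)).measure_preimage hc.measurableSet.nullMeasurableSet
  have key := tendsto_card_div_pow_atTop_volume S hSc.isBounded hSc.measurableSet
    (hSconv.addHaar_frontier volume)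
  rw [Measure.real, hvol, ← Measure.real] at key
  refine key.congr' ?_
  filter_upwards [eventually_gt_atTop 0] with n hn
  have hn' : (n : ℝ) ≠ 0 := by positivity
  rw [Fintype.card_fin]
  congr 2
  unfold ppCount
  rw [← _root_.Nat.card_coe_set_eq]
  symm
  apply Nat.card_congr
  refine Equiv.subtypeEquiv ((WithLp.equiv 2 (Fin d → ℝ)).trans (Equiv.smulRight hn').symm) ?_
  intro x
  simp only [Set.mem_inter_iff, mem_lattice_iff, Set.mem_smul_set_iff_inv_smul_mem₀ hn',
    Set.mem_smul_set_iff_inv_smul_mem₀ (inv_ne_zero hn'), hS]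
  simp [Equiv.smulRight, hn', smul_smul]

end aux

theorem volume_ppyr_eq_of_ehrhart_eq
    (d : ℕ) (K H : Set (EuclideanSpace ℝ (Fin d)))
    (hKc : IsCompact K) (hKconv : Convex ℝ K) (hKint : (interior K).Nonempty)
    (hHc : IsCompact H) (hHconv : Convex ℝ H) (hHint : (interior H).Nonempty)
    (h : ∀ s : ℝ, 0 < s → ehrhart d K s = ehrhart d H s) :
    volume (ppyr d K) = volume (ppyr d H) := by
  have hKne := hKint.mono interior_subset
  have hHne := hHint.mono interior_subset
  let D : ℝ → ℤ := fun s => (ppCount d K s : ℤ) - ppCount d H s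
  have hcont : ContinuousOn D (Ioi 0) := by
    intro t ht
    have ht : 0 < t := ht
    apply ContinuousAt.continuousWithinAt
    apply continuousAt_iff_continuous_left'_right'.2
    constructor
    · refine Tendsto.congr' ?_ (tendsto_const_nhds (x := D t))
      have hpos : ∀ᶠ s in 𝓝[<] t, 0 < s := nhdsWithin_le_nhds (lt_mem_nhds ht)
      filter_upwards [count_left hKc hKconv hKne ht, count_left hHc hHconv hHne ht, hpos]
        with s h1 h2 h3
      rw [h t ht, h s h3] at h1
      simp only [D]
      linarith
    · refine Tendsto.congr' ?_ (tendsto_const_nhds (x := D t))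
      filter_upwards [count_right hKc ht, count_right hHc ht] with s h1 h2
      simp only [D]
      rw [h1, h2]
  have hD : ∀ t, 0 < t → D t = 0 := by
    intro t ht
    obtain ⟨s, hs1, hs2, hs0⟩ := ((count_zero hKc hKne).and
      ((count_zero hHc hHne).and self_mem_nhdsWithin)).exists
    rw [isPreconnected_Ioi.constant hcont (show t ∈ Ioi (0:ℝ) from ht) hs0]
    simp [D, hs1, hs2]
  have hlim : volume.real (ppyr d K) = volume.real (ppyr d H) := by
    refine tendsto_nhds_unique (tendsto_count hKc hKconv) ((tendsto_count hHc hHconv).congr' ?_)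
    filter_upwards [eventually_gt_atTop 0] with n hn
    have := hD n (by positivity)
    have e : ppCount d K n = ppCount d H n := by
      simp only [D] at this
      omega
    rw [e]
  exact (measureReal_eq_measureReal_iff (isCompact_ppyr hKc).measure_lt_top.ne
    (isCompact_ppyr hHc).measure_lt_top.ne).1 hlim
end

section
/- Let K and H be convex bodies in ℝ^d such that L_K(s) = L_H(s) for all real s > 0. Then L_{ppyr K}(s) = L_{ppyr H}(s) for all real s > 0; that is, the pseudopyramids of K and H have equal real Ehrhart functions. -/
open Set MeasureTheory
open scoped Pointwise

open Filter Topology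

lemma lattice_ball_finite (d : ℕ) (R : ℝ) : {x ∈ latticePts d | ‖x‖ ≤ R}.Finite := by
  have hf : (Set.univ.pi (fun _ : Fin d => Set.Icc (-⌈R⌉) ⌈R⌉)).Finite :=
    Set.Finite.pi (fun _ => Set.finite_Icc _ _)
  refine (hf.image (fun n : Fin d → ℤ =>
    (WithLp.toLp 2 (fun i => (n i : ℝ)) : EuclideanSpace ℝ (Fin d)))).subset ?_
  rintro x ⟨hx, hxR⟩
  choose n hn using hx
  refine ⟨n, ?_, ?_⟩
  · intro i _
    have h1 : |x i| ≤ R := by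
      have := PiLp.norm_apply_le x i
      rw [Real.norm_eq_abs] at this
      exact this.trans hxR
    rw [hn i] at h1
    have h2 := abs_le.1 (h1.trans (Int.le_ceil R))
    constructor
    · have := h2.1
      exact (Int.cast_le (R := ℝ)).1 (by push_cast; exact this)
    · have := h2.2
      exact (Int.cast_le (R := ℝ)).1 this
  · ext i
    simp [hn i]

/-- Lattice points entering the dilates of `K` exactly at time `t`. -/
def entering (d : ℕ) (K : Set (EuclideanSpace ℝ (Fin d))) (t : ℝ) :
    Set (EuclideanSpace ℝ (Fin d)) :=
  {x | x ∈ latticePts d ∧ t⁻¹ • x ∈ K ∧ ∀ u, 0 < u → u < t → u⁻¹ • x ∉ K}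

lemma norm_le_of_inv_smul_mem {d : ℕ} {K : Set (EuclideanSpace ℝ (Fin d))} {R : ℝ} (hR0 : 0 < R)
    (hR : ∀ x ∈ K, ‖x‖ ≤ R) {t s : ℝ} (ht : 0 < t) (hts : t ≤ s) {x : EuclideanSpace ℝ (Fin d)}
    (hx : t⁻¹ • x ∈ K) : ‖x‖ ≤ s * R := by
  have h1 := hR _ hx
  rw [norm_smul, Real.norm_of_nonneg (inv_nonneg.2 ht.le), inv_mul_le_iff₀ ht] at h1
  exact h1.trans (by gcongr)

lemma mem_between {d : ℕ} {K : Set (EuclideanSpace ℝ (Fin d))} (hK : Convex ℝ K)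
    {v u t : ℝ} (hv : 0 < v) (hvu : v ≤ u) (hut : u ≤ t) {x : EuclideanSpace ℝ (Fin d)}
    (h1 : v⁻¹ • x ∈ K) (h2 : t⁻¹ • x ∈ K) : u⁻¹ • x ∈ K := by
  have hc : Convex ℝ {r : ℝ | r • x ∈ K} :=
    hK.is_linear_preimage (f := fun r : ℝ => r • x) (IsLinearMap.mk (fun a b => add_smul a b x)
      (fun a b => by simp [mul_smul]))
  have hu : 0 < u := hv.trans_le hvu
  exact hc.ordConnected.out h2 h1 ⟨inv_anti₀ hu hut, inv_anti₀ hv hvu⟩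

lemma pointwise_ev {d : ℕ} {K : Set (EuclideanSpace ℝ (Fin d))} (hc : IsCompact K)
    (hK : Convex ℝ K) {t : ℝ} (ht : 0 < t) {x : EuclideanSpace ℝ (Fin d)} (hx : x ∈ latticePts d) :
    ∀ᶠ u in 𝓝[<] t, (u⁻¹ • x ∈ K ↔ t⁻¹ • x ∈ K ∧ x ∉ entering d K t) := by
  by_cases h1 : t⁻¹ • x ∈ K
  · by_cases h2 : x ∈ entering d K t
    · filter_upwards [Ioo_mem_nhdsLT ht] with u hu
      have := h2.2.2 u hu.1 hu.2
      tauto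
    · have h3 : ∃ v, 0 < v ∧ v < t ∧ v⁻¹ • x ∈ K := by
        by_contra hcon
        push Not at hcon
        exact h2 ⟨hx, h1, hcon⟩
      obtain ⟨v, hv, hvt, hvK⟩ := h3
      filter_upwards [Ioo_mem_nhdsLT hvt] with u hu
      have := mem_between hK hv hu.1.le hu.2.le hvK h1
      tauto
  · have hcont : ContinuousAt (fun u : ℝ => u⁻¹ • x) t :=
      (continuousAt_inv₀ ht.ne').smul continuousAt_const
    have := hcont.eventually (hc.isClosed.isOpen_compl.mem_nhds h1)
    filter_upwards [this.filter_mono nhdsWithin_le_nhds] with u hu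
    have hu' : u⁻¹ • x ∉ K := hu
    tauto

lemma ehrhart_eq' {d : ℕ} {K : Set (EuclideanSpace ℝ (Fin d))} {u : ℝ} (hu : 0 < u) :
    ehrhart d K u = {x | x ∈ latticePts d ∧ u⁻¹ • x ∈ K}.ncard := by
  unfold ehrhart
  congr 1
  ext x
  simp only [Set.mem_inter_iff, Set.mem_smul_set_iff_inv_smul_mem₀ hu.ne', Set.mem_ofPred_eq]
  tauto

lemma ehrhart_jump {d : ℕ} {K : Set (EuclideanSpace ℝ (Fin d))} (hc : IsCompact K)
    (hK : Convex ℝ K) {t : ℝ} (ht : 0 < t) :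
    ∀ᶠ u in 𝓝[<] t, ehrhart d K t = ehrhart d K u + (entering d K t).ncard := by
  obtain ⟨R, hR0, hR⟩ := hc.isBounded.exists_pos_norm_le
  have hB := lattice_ball_finite d (t * R)
  have hev : ∀ᶠ u in 𝓝[<] t, ∀ x ∈ {x ∈ latticePts d | ‖x‖ ≤ t * R},
      (u⁻¹ • x ∈ K ↔ t⁻¹ • x ∈ K ∧ x ∉ entering d K t) :=
    (hB.eventually_all).2 fun x hx => pointwise_ev hc hK ht hx.1
  filter_upwards [hev, Ioo_mem_nhdsLT ht] with u hu hut
  have hf1 : {x | x ∈ latticePts d ∧ u⁻¹ • x ∈ K}.Finite :=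
    hB.subset fun x hx => ⟨hx.1, norm_le_of_inv_smul_mem hR0 hR hut.1 hut.2.le hx.2⟩
  have hf2 : (entering d K t).Finite :=
    hB.subset fun x hx => ⟨hx.1, norm_le_of_inv_smul_mem hR0 hR ht le_rfl hx.2.1⟩
  rw [ehrhart_eq' ht, ehrhart_eq' hut.1, ← Set.ncard_union_eq ?_ hf1 hf2]
  · congr 1
    ext x
    constructor
    · rintro ⟨hx, hxt⟩
      by_cases hE : x ∈ entering d K t
      · exact Or.inr hE
      · exact Or.inl ⟨hx, (hu x ⟨hx, norm_le_of_inv_smul_mem hR0 hR ht le_rfl hxt⟩).2 ⟨hxt, hE⟩⟩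
    · rintro (⟨hx, hxu⟩ | hE)
      · exact ⟨hx, ((hu x ⟨hx, norm_le_of_inv_smul_mem hR0 hR hut.1 hut.2.le hxu⟩).1 hxu).1⟩
      · exact ⟨hE.1, hE.2.1⟩
  · rw [Set.disjoint_left]
    rintro x ⟨hx, hxu⟩ hE
    exact hE.2.2 u hut.1 hut.2 hxu

lemma exists_entry {d : ℕ} {K : Set (EuclideanSpace ℝ (Fin d))} (hc : IsCompact K)
    {v : ℝ} (hv : 0 < v) {x : EuclideanSpace ℝ (Fin d)} (hx : x ∈ latticePts d) (hx0 : x ≠ 0)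
    (hvK : v⁻¹ • x ∈ K) : ∃ t, 0 < t ∧ t ≤ v ∧ x ∈ entering d K t := by
  obtain ⟨R, hR0, hR⟩ := hc.isBounded.exists_pos_norm_le
  have hxn : 0 < ‖x‖ := norm_pos_iff.2 hx0
  have hcl : IsClosed {r : ℝ | r • x ∈ K} :=
    hc.isClosed.preimage (continuous_id.smul continuous_const)
  have hA : IsCompact (Set.Icc v⁻¹ (R / ‖x‖) ∩ {r : ℝ | r • x ∈ K}) :=
    isCompact_Icc.inter_right hcl
  have hle : ∀ r : ℝ, 0 < r → r • x ∈ K → r ≤ R / ‖x‖ := by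
    intro r hr hrK
    have := hR _ hrK
    rw [norm_smul, Real.norm_of_nonneg hr.le] at this
    rwa [le_div_iff₀ hxn]
  have hvi : 0 < v⁻¹ := inv_pos.2 hv
  obtain ⟨r, ⟨⟨hr1, hr2⟩, hrK⟩, hmax⟩ := hA.exists_isGreatest ⟨v⁻¹, ⟨le_rfl, hle _ hvi hvK⟩, hvK⟩
  have hr : 0 < r := hvi.trans_le hr1
  refine ⟨r⁻¹, inv_pos.2 hr, inv_le_of_inv_le₀ hv hr1, hx, by simpa using hrK, ?_⟩
  intro u hu hur huK
  have hlt : r < u⁻¹ := (lt_inv_comm₀ hr hu).2 hur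
  have := hmax ⟨⟨hr1.trans hlt.le, hle _ (inv_pos.2 hu) huK⟩, huK⟩
  linarith

lemma entering_unique {d : ℕ} {K : Set (EuclideanSpace ℝ (Fin d))} {t u : ℝ} (ht : 0 < t)
    (hu : 0 < u) {x : EuclideanSpace ℝ (Fin d)} (h1 : x ∈ entering d K t)
    (h2 : x ∈ entering d K u) : t = u := by
  rcases lt_trichotomy t u with h | h | h
  · exact absurd h1.2.1 (h2.2.2 t ht h)
  · exact h
  · exact absurd h2.2.1 (h1.2.2 u hu h)

lemma entering_ne_zero {d : ℕ} {K : Set (EuclideanSpace ℝ (Fin d))} {t : ℝ} (ht : 0 < t)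
    {x : EuclideanSpace ℝ (Fin d)} (h1 : x ∈ entering d K t) : x ≠ 0 := by
  rintro rfl
  have h2 := h1.2.1
  have h3 := h1.2.2 (t / 2) (by linarith) (by linarith)
  simp only [smul_zero] at h2 h3
  exact h3 h2

lemma mem_ppyr {d : ℕ} {K : Set (EuclideanSpace ℝ (Fin d))} (hc : IsCompact K)
    (hne : K.Nonempty) {s : ℝ} (hs : 0 < s) :
    s • ppyr d K ∩ latticePts d = insert 0 {x | ∃ t, 0 < t ∧ t ≤ s ∧ x ∈ entering d K t} := by
  ext x
  simp only [Set.mem_inter_iff, Set.mem_insert_iff, Set.mem_ofPred_eq,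
    Set.mem_smul_set_iff_inv_smul_mem₀ hs.ne', ppyr, Set.mem_iUnion, exists_prop]
  constructor
  · rintro ⟨⟨l, ⟨hl0, hl1⟩, hl⟩, hx⟩
    by_cases hx0 : x = 0
    · exact Or.inl hx0
    right
    rcases hl0.eq_or_lt with rfl | hl0
    · exfalso
      rw [Set.zero_smul_set hne] at hl
      have : s⁻¹ • x = 0 := hl
      simp [hs.ne', hx0] at this
    · rw [Set.mem_smul_set_iff_inv_smul_mem₀ hl0.ne', smul_smul, ← mul_inv] at hl
      obtain ⟨t, h1, h2, h3⟩ := exists_entry hc (mul_pos hl0 hs) hx hx0 hl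
      exact ⟨t, h1, h2.trans (by nlinarith), h3⟩
  · rintro (rfl | ⟨t, ht, hts, hE⟩)
    · refine ⟨⟨0, by simp, ?_⟩, fun i => ⟨0, by simp⟩⟩
      rw [Set.zero_smul_set hne]
      simp
    · refine ⟨⟨t / s, ⟨by positivity, (div_le_one hs).2 hts⟩, ?_⟩, hE.1⟩
      rw [Set.mem_smul_set_iff_inv_smul_mem₀ (by positivity), smul_smul]
      have : (t / s)⁻¹ * s⁻¹ = t⁻¹ := by field_simp
      rw [this]
      exact hE.2.1

lemma entered_finite {d : ℕ} {K : Set (EuclideanSpace ℝ (Fin d))} (hc : IsCompact K) (s : ℝ) :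
    {x | ∃ t, 0 < t ∧ t ≤ s ∧ x ∈ entering d K t}.Finite := by
  obtain ⟨R, hR0, hR⟩ := hc.isBounded.exists_pos_norm_le
  refine (lattice_ball_finite d (s * R)).subset ?_
  rintro x ⟨t, ht, hts, hE⟩
  exact ⟨hE.1, norm_le_of_inv_smul_mem hR0 hR ht hts hE.2.1⟩

lemma ppyr_count {d : ℕ} {K : Set (EuclideanSpace ℝ (Fin d))} (hc : IsCompact K)
    (hne : K.Nonempty) {s : ℝ} (hs : 0 < s) :
    ∃ T : Finset ℝ, (∀ t ∈ T, 0 < t ∧ t ≤ s) ∧ ∀ T' : Finset ℝ, T ⊆ T' →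
      (∀ t ∈ T', 0 < t ∧ t ≤ s) →
      ehrhart d (ppyr d K) s = ∑ t ∈ T', (entering d K t).ncard + 1 := by
  classical
  have hfin := entered_finite hc s
  have hex : ∀ x, ∃ t, x ∈ hfin.toFinset → 0 < t ∧ t ≤ s ∧ x ∈ entering d K t := by
    intro x
    by_cases hx : x ∈ hfin.toFinset
    · obtain ⟨t, ht⟩ := hfin.mem_toFinset.1 hx
      exact ⟨t, fun _ => ht⟩
    · exact ⟨0, fun h => absurd h hx⟩
  choose a ha using hex
  refine ⟨hfin.toFinset.image a, ?_, ?_⟩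
  · intro t ht
    obtain ⟨x, hx, rfl⟩ := Finset.mem_image.1 ht
    exact ⟨(ha x hx).1, (ha x hx).2.1⟩
  · intro T' hT hT'
    unfold ehrhart
    rw [mem_ppyr hc hne hs, Set.ncard_insert_of_notMem _ hfin]
    · rw [Set.ncard_eq_toFinset_card _ hfin,
        Finset.card_eq_sum_card_fiberwise (f := a) (t := T')
          (fun x hx => hT (Finset.mem_image_of_mem a hx))]
      congr 1
      refine Finset.sum_congr rfl fun t ht => ?_
      rw [← Set.ncard_coe_finset]
      congr 1
      ext x
      simp only [Finset.coe_filter, Set.mem_ofPred_eq]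
      constructor
      · rintro ⟨hx, rfl⟩
        exact (ha x hx).2.2
      · intro hE
        have hx : x ∈ hfin.toFinset := hfin.mem_toFinset.2 ⟨t, (hT' t ht).1, (hT' t ht).2, hE⟩
        exact ⟨hx, entering_unique (ha x hx).1 (hT' t ht).1 (ha x hx).2.2 hE⟩
    · rintro ⟨t, ht, _, hE⟩
      exact entering_ne_zero ht hE rfl

theorem ehrhart_ppyr_eq_of_ehrhart_eq
    (d : ℕ) (K H : Set (EuclideanSpace ℝ (Fin d)))
    (hKc : IsCompact K) (hKconv : Convex ℝ K) (hKint : (interior K).Nonempty)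
    (hHc : IsCompact H) (hHconv : Convex ℝ H) (hHint : (interior H).Nonempty)
    (h : ∀ s : ℝ, 0 < s → ehrhart d K s = ehrhart d H s) :
    ∀ s : ℝ, 0 < s → ehrhart d (ppyr d K) s = ehrhart d (ppyr d H) s := by
  classical
  intro s hs
  obtain ⟨T1, h1, h1'⟩ := ppyr_count hKc (hKint.mono interior_subset) hs
  obtain ⟨T2, h2, h2'⟩ := ppyr_count hHc (hHint.mono interior_subset) hs
  have hT : ∀ t ∈ T1 ∪ T2, 0 < t ∧ t ≤ s := by
    intro t ht
    rcases Finset.mem_union.1 ht with ht | ht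
    · exact h1 t ht
    · exact h2 t ht
  rw [h1' _ Finset.subset_union_left hT, h2' _ Finset.subset_union_right hT]
  congr 1
  refine Finset.sum_congr rfl fun t ht => ?_
  have ht0 := (hT t ht).1
  obtain ⟨u, ⟨hu1, hu2⟩, hu⟩ := (((ehrhart_jump hKc hKconv ht0).and
    (ehrhart_jump hHc hHconv ht0)).and (Ioo_mem_nhdsLT ht0)).exists
  rw [h t ht0, h u hu.1] at hu1
  omega
end

section
/- Let v be a unit vector in ℝ^d and let K ⊆ ℝ^d be a convex body. Then lim_{μ → ∞} μ^{d−1} · area(S(K + μv)) = V_K(v), where area denotes (d−1)-dimensional Hausdorff measure. -/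
open Set MeasureTheory Filter
open scoped Pointwise Topology RealInnerProductSpace

/-- Spherical projection: `S(A) = {x/‖x‖ : x ∈ A, x ≠ 0}`. -/
noncomputable def sphProj (d : ℕ) (A : Set (EuclideanSpace ℝ (Fin d))) :
    Set (EuclideanSpace ℝ (Fin d)) :=
  (fun x => ‖x‖⁻¹ • x) '' (A \ {0})

/-- `V_K(v)`: the `(d-1)`-dimensional Hausdorff measure of the orthogonal projection of `K`
onto the hyperplane `{v}ᗮ`. -/
noncomputable def projVol (d : ℕ) (K : Set (EuclideanSpace ℝ (Fin d)))
    (v : EuclideanSpace ℝ (Fin d)) : ℝ :=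
  (μH[(d : ℝ) - 1] ((fun x => x - ⟪x, v⟫ • v) '' K)).toReal


lemma key_tendsto {E F : Type*} [NormedAddCommGroup E] [NormedSpace ℝ E] [CompleteSpace E]
    [NormedAddCommGroup F] [NormedSpace ℝ F] [FiniteDimensional ℝ F]
    [MeasurableSpace F] [BorelSpace F] (ν : Measure F) [ν.IsAddHaarMeasure]
    (Q : E →L[ℝ] F) (hQs : Function.Surjective Q) (hQ : ∀ x, ‖Q x‖ ≤ ‖x‖)
    (K : Set E) (hKc : IsCompact K) (hKconv : Convex ℝ K) (hKint : (interior K).Nonempty)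
    (N : ℝ → E → ℝ) (hNc : ∀ m, Continuous (N m))
    (hN : ∀ m, 0 ≤ m → ∀ x, |N m x - m| ≤ ‖x‖)
    (hI : ∀ x ∈ interior K, ∀ᶠ m in atTop, ∃ x' ∈ K, (m / N m x') • Q x' = Q x) :
    Tendsto (fun m : ℝ => ν ((fun x => (m / N m x) • Q x) '' K)) atTop (𝓝 (ν (Q '' K))) := by
  obtain ⟨R, hR0, hR⟩ : ∃ R : ℝ, 0 < R ∧ ∀ x ∈ K, ‖x‖ ≤ R := by
    obtain ⟨R, h0, hR⟩ := hKc.isBounded.exists_pos_norm_le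
    exact ⟨R, h0, hR⟩
  have hNlow : ∀ m, 2 * R < m → ∀ x ∈ K, m / 2 ≤ N m x := by
    intro m hm x hx
    have := abs_le.1 (hN m (by linarith) x)
    have := hR x hx
    linarith
  set T : ℝ → Set F := fun m => (fun x => (m / N m x) • Q x) '' K with hT
  have hTc : ∀ m, 2 * R < m → IsCompact (T m) := by
    intro m hm
    apply hKc.image_of_continuousOn
    apply ContinuousOn.smul _ Q.continuous.continuousOn
    apply ContinuousOn.div continuousOn_const (hNc m).continuousOn
    intro x hx
    have := hNlow m hm x hx
    linarith
  have hQKc : IsCompact (Q '' K) := hKc.image Q.continuous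
  let A : ℝ → Set F := fun m => if 2 * R < m then T m else ∅
  have hAT : ∀ᶠ m in atTop, A m = T m := by
    filter_upwards [eventually_gt_atTop (2 * R)] with m hm
    simp [A, hm]
  have main : Tendsto (fun m => ν (A m)) atTop (𝓝 (ν (Q '' K))) := by
    refine tendsto_measure_of_ae_tendsto_indicator atTop hQKc.isClosed.measurableSet ?_
      (B := Metric.closedBall 0 (2 * R)) Metric.isClosed_closedBall.measurableSet
      (isCompact_closedBall _ _).measure_lt_top.ne ?_ ?_
    · intro m
      by_cases hm : 2 * R < m
      · simpa [A, hm] using (hTc m hm).isClosed.measurableSet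
      · simp [A, hm]
    · filter_upwards [eventually_gt_atTop (2 * R), hAT] with m hm hA
      rw [hA]
      rintro _ ⟨x, hx, rfl⟩
      have h1 := hNlow m hm x hx
      have h2 : 0 < N m x := by linarith
      have h3 : m / N m x ≤ 2 := by rw [div_le_iff₀ h2]; linarith
      have h4 : 0 ≤ m / N m x := div_nonneg (by linarith) h2.le
      rw [mem_closedBall_zero_iff, norm_smul, Real.norm_of_nonneg h4]
      exact mul_le_mul h3 ((hQ x).trans (hR x hx)) (norm_nonneg _) (by norm_num)
    · have hnull : ν (frontier (Q '' interior K)) = 0 :=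
        (hKconv.interior.is_linear_image Q.isLinear).addHaar_frontier ν
      have hae : ∀ᵐ y ∂ν, y ∉ frontier (Q '' interior K) := by
        rw [ae_iff]; simpa using hnull
      filter_upwards [hae] with y hy
      by_cases hy1 : y ∈ Q '' interior K
      · obtain ⟨x, hx, rfl⟩ := hy1
        filter_upwards [hI x hx, hAT] with m hm hA
        rw [hA]
        exact ⟨fun _ => ⟨x, interior_subset hx, rfl⟩, fun _ => hm⟩
      · have hopen : IsOpen (Q '' interior K) := Q.isOpenMap hQs _ isOpen_interior
        have hy2 : y ∉ Q '' K := by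
          rintro ⟨x, hx, rfl⟩
          apply hy
          rw [frontier, hopen.interior_eq]
          refine ⟨?_, hy1⟩
          apply image_closure_subset_closure_image Q.continuous
          refine ⟨x, ?_, rfl⟩
          rw [hKconv.closure_interior_eq_closure_of_nonempty_interior hKint]
          exact subset_closure hx
        obtain ⟨δ, hδ, hball⟩ := Metric.isOpen_iff.1 hQKc.isClosed.isOpen_compl y hy2
        filter_upwards [eventually_gt_atTop (2 * R), hAT,
          eventually_gt_atTop (2 * R * R / δ)] with m hm hA hmδ
        rw [hA]
        refine iff_of_false ?_ hy2
        rintro ⟨x, hx, rfl⟩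
        have h1 := hNlow m hm x hx
        have h2 : 0 < N m x := by linarith
        have hmem : Q x ∈ Metric.ball ((m / N m x) • Q x) δ := by
          rw [Metric.mem_ball, dist_eq_norm]
          have : Q x - (m / N m x) • Q x = ((N m x - m) / N m x) • Q x := by
            rw [sub_div, div_self h2.ne', sub_smul, one_smul]
          rw [this, norm_smul, norm_div, Real.norm_of_nonneg h2.le, Real.norm_eq_abs]
          have h5 : |N m x - m| ≤ R := (hN m (by linarith) x).trans (hR x hx)
          have h6 : ‖Q x‖ ≤ R := (hQ x).trans (hR x hx)
          rw [div_mul_eq_mul_div, div_lt_iff₀ h2]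
          rw [div_lt_iff₀ hδ] at hmδ
          have h7 : |N m x - m| * ‖Q x‖ ≤ R * R :=
            mul_le_mul h5 h6 (norm_nonneg _) hR0.le
          nlinarith
        exact hball hmem ⟨x, hx, rfl⟩
  refine main.congr' ?_
  filter_upwards [hAT] with m hm
  rw [hm]

lemma norm_normalize_sub_le {E : Type*} [NormedAddCommGroup E] [InnerProductSpace ℝ E]
    {a b : E} (ha : 1 ≤ ‖a‖) (hb : 1 ≤ ‖b‖) :
    ‖‖a‖⁻¹ • a - ‖b‖⁻¹ • b‖ ≤ ‖a - b‖ := by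
  have ha0 : 0 < ‖a‖ := by linarith
  have hb0 : 0 < ‖b‖ := by linarith
  refine le_of_sq_le_sq ?_ (norm_nonneg _)
  rw [norm_sub_sq_real, norm_sub_sq_real, norm_smul, norm_smul, norm_inv, norm_inv, norm_norm,
    norm_norm, inv_mul_cancel₀ ha0.ne', inv_mul_cancel₀ hb0.ne', inner_smul_left, inner_smul_right]
  have hi : ⟪a, b⟫ ≤ ‖a‖ * ‖b‖ := real_inner_le_norm a b
  have hab : 1 ≤ ‖a‖ * ‖b‖ := one_le_mul_of_one_le_of_one_le ha hb
  set p := ‖a‖ * ‖b‖ with hp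
  have : (starRingEnd ℝ) ‖a‖⁻¹ * (‖b‖⁻¹ * ⟪a, b⟫) = ⟪a, b⟫ / p := by
    simp [hp]; field_simp
  rw [this]
  have h1 : ⟪a, b⟫ / p ≤ 1 := by rw [div_le_one (by linarith)]; exact hi
  have h2 : ⟪a, b⟫ = p * (⟪a, b⟫ / p) := by field_simp
  have h3 : 0 ≤ (‖a‖ - ‖b‖) ^ 2 := sq_nonneg _
  nlinarith

lemma tendsto_area_aux (n : ℕ) (K : Set (EuclideanSpace ℝ (Fin (n + 1))))
    (v : EuclideanSpace ℝ (Fin (n + 1))) (hv : ‖v‖ = 1)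
    (hKc : IsCompact K) (hKconv : Convex ℝ K) (hKint : (interior K).Nonempty) :
    Tendsto
      (fun μ : ℝ =>
        μ ^ n * (μH[(n : ℝ)] (sphProj (n + 1) ((fun x => x + μ • v) '' K))).toReal)
      atTop (𝓝 (μH[(n : ℝ)] ((fun x => x - ⟪x, v⟫ • v) '' K)).toReal) := by
  have hv0 : v ≠ 0 := by rintro rfl; simp at hv
  have hvv : ⟪v, v⟫ = (1 : ℝ) := by rw [real_inner_self_eq_norm_sq, hv]; norm_num
  let H := (Submodule.span ℝ {v})ᗮ
  have hfin : Module.finrank ℝ H = n := by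
    have : Fact (Module.finrank ℝ (EuclideanSpace ℝ (Fin (n + 1))) = n + 1) := ⟨by simp⟩
    exact Submodule.finrank_orthogonal_span_singleton hv0
  let ν : Measure H := μH[(n : ℝ)]
  have : ν.IsAddHaarMeasure := by
    have := isAddHaarMeasure_hausdorffMeasure (E := H)
    rw [hfin] at this
    exact this
  let Q : EuclideanSpace ℝ (Fin (n + 1)) →L[ℝ] H := H.orthogonalProjectionOnto
  have hcoe : ∀ x, ((Q x : H) : EuclideanSpace ℝ (Fin (n + 1))) = x - ⟪x, v⟫ • v := by
    intro x
    have h := Submodule.starProjection_orthogonal_val (K := Submodule.span ℝ {v}) x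
    rw [Submodule.starProjection_unit_singleton ℝ hv, real_inner_comm] at h
    exact h
  have hQv : Q v = 0 := by
    apply Subtype.ext
    rw [hcoe, hvv]; simp
  have hQH : ∀ y : H, Q y = y := fun y => H.orthogonalProjectionOnto_mem_subspace_eq_self y
  have hQs : Function.Surjective Q := fun y => ⟨y, hQH y⟩
  have hQn : ∀ x, ‖Q x‖ ≤ ‖x‖ := fun x => H.norm_orthogonalProjectionOnto_apply_le x
  have hyv : ∀ y : H, ⟪(y : EuclideanSpace ℝ (Fin (n + 1))), v⟫ = (0 : ℝ) := by
    intro y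
    rw [real_inner_comm]
    exact Submodule.mem_orthogonal_singleton_iff_inner_right.mp y.2
  have hiv : ∀ x : EuclideanSpace ℝ (Fin (n + 1)), |⟪x, v⟫| ≤ ‖x‖ := by
    intro x
    have := abs_real_inner_le_norm x v
    rwa [hv, mul_one] at this
  -- perturbed points stay in K
  have hpert : ∀ x ∈ interior K, ∀ t : ℝ → ℝ, Tendsto t atTop (𝓝 1) →
      ∀ᶠ m in atTop, t m • (Q x : EuclideanSpace ℝ (Fin (n + 1))) + ⟪x, v⟫ • v ∈ K := by
    intro x hx t ht
    have h1 : Tendsto (fun m => t m • (Q x : EuclideanSpace ℝ (Fin (n + 1))) + ⟪x, v⟫ • v) atTop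
        (𝓝 ((1 : ℝ) • (Q x : EuclideanSpace ℝ (Fin (n + 1))) + ⟪x, v⟫ • v)) :=
      (ht.smul_const _).add_const _
    have h2 : (1 : ℝ) • (Q x : EuclideanSpace ℝ (Fin (n + 1))) + ⟪x, v⟫ • v = x := by
      rw [hcoe, one_smul, sub_add_cancel]
    rw [h2] at h1
    exact h1.eventually (mem_interior_iff_mem_nhds.1 hx)
  have hQpert : ∀ (t s : ℝ) (y : H), Q (t • (y : EuclideanSpace ℝ (Fin (n + 1))) + s • v) = t • y := by
    intro t s y
    rw [map_add, map_smul, map_smul, hQv, hQH, smul_zero, add_zero]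
  have hipert : ∀ (t s : ℝ) (y : H),
      ⟪t • (y : EuclideanSpace ℝ (Fin (n + 1))) + s • v, v⟫ = s := by
    intro t s y
    rw [inner_add_left, inner_smul_left, inner_smul_left, hyv, hvv]; simp
  have hdiv0 : ∀ c : ℝ, Tendsto (fun m : ℝ => c / m) atTop (𝓝 0) := fun c =>
    tendsto_const_nhds.div_atTop tendsto_id
  -- gnomonic sets
  have hG := key_tendsto ν Q hQs hQn K hKc hKconv hKint (fun m x => m + ⟪x, v⟫)
    (fun m => by fun_prop) (fun m _ x => by simpa using hiv x) (by
      intro x hx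
      have ht : Tendsto (fun m : ℝ => 1 + ⟪x, v⟫ / m) atTop (𝓝 1) := by
        simpa using (hdiv0 ⟪x, v⟫).const_add 1
      filter_upwards [hpert x hx _ ht, eventually_gt_atTop 0, eventually_gt_atTop ‖x‖]
        with m hm hm0 hmx
      refine ⟨_, hm, ?_⟩
      have := abs_le.1 (hiv x)
      have h3 : m + ⟪x, v⟫ ≠ 0 := by linarith
      rw [hipert, hQpert, smul_smul]
      have : m / (m + ⟪x, v⟫) * (1 + ⟪x, v⟫ / m) = 1 := by field_simp
      rw [this, one_smul])
  -- projected spherical sets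
  have hP := key_tendsto ν Q hQs hQn K hKc hKconv hKint (fun m x => ‖x + m • v‖)
    (fun m => by fun_prop) (fun m hm x => by
      have h := abs_norm_sub_norm_le (x + m • v) (m • v)
      rwa [norm_smul, hv, mul_one, Real.norm_of_nonneg hm, add_sub_cancel_right] at h) (by
      intro x hx
      set r := ‖Q x‖ with hr
      have ht : Tendsto (fun m : ℝ => (1 + ⟪x, v⟫ / m) / √(1 - (r / m) ^ 2)) atTop (𝓝 1) := by
        have h1 : Tendsto (fun m : ℝ => 1 + ⟪x, v⟫ / m) atTop (𝓝 1) := by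
          simpa using (hdiv0 ⟪x, v⟫).const_add 1
        have h2 : Tendsto (fun m : ℝ => √(1 - (r / m) ^ 2)) atTop (𝓝 1) := by
          simpa using (((hdiv0 r).pow 2).const_sub 1).sqrt
        have h3 := h1.div h2 one_ne_zero
        rw [div_one] at h3
        exact h3
      filter_upwards [hpert x hx _ ht, eventually_gt_atTop 0, eventually_gt_atTop ‖x‖]
        with m hm hm0 hmx
      refine ⟨_, hm, ?_⟩
      have hs := abs_le.1 (hiv x)
      have hrm : r / m < 1 := by rw [div_lt_one hm0]; exact (hQn x).trans_lt hmx
      have hrm0 : 0 ≤ r / m := div_nonneg (norm_nonneg _) hm0.le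
      have hq : 0 < 1 - (r / m) ^ 2 := by nlinarith
      set q := √(1 - (r / m) ^ 2) with hqdef
      have hq0 : 0 < q := Real.sqrt_pos.2 hq
      have hqs : q ^ 2 = 1 - (r / m) ^ 2 := Real.sq_sqrt hq.le
      have hnum : 0 < 1 + ⟪x, v⟫ / m := by
        have : 1 + ⟪x, v⟫ / m = (m + ⟪x, v⟫) / m := by field_simp
        rw [this]
        exact div_pos (by linarith) hm0
      set t := (1 + ⟪x, v⟫ / m) / q with htdef
      have ht0 : 0 < t := div_pos hnum hq0
      have hnorm : ‖t • (Q x : EuclideanSpace ℝ (Fin (n + 1))) + ⟪x, v⟫ • v + m • v‖ = m * t := by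
        rw [← sq_eq_sq₀ (norm_nonneg _) (by positivity), add_assoc, ← add_smul,
          norm_add_sq_real, inner_smul_left, inner_smul_right, hyv, norm_smul, norm_smul, hv,
          ← Submodule.coe_norm, ← hr, mul_pow, mul_pow, Real.norm_eq_abs, Real.norm_eq_abs, sq_abs, sq_abs]
        have e1 : ⟪x, v⟫ + m = m * (t * q) := by
          rw [htdef]; field_simp; ring
        have e2 : r ^ 2 = m ^ 2 * (1 - q ^ 2) := by
          rw [hqs]; field_simp; ring
        rw [e1, e2]; simp; ring
      rw [hnorm, hQpert, smul_smul]
      have : m / (m * t) * t = 1 := by field_simp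
      rw [this, one_smul])
  obtain ⟨R, hR0, hR⟩ : ∃ R : ℝ, 0 < R ∧ ∀ x ∈ K, ‖x‖ ≤ R := by
    obtain ⟨R, h0, hR⟩ := hKc.isBounded.exists_pos_norm_le
    exact ⟨R, h0, hR⟩
  have hproj : μH[(n : ℝ)] ((fun x => x - ⟪x, v⟫ • v) '' K) = ν (Q '' K) := by
    have h := (H.subtypeₗᵢ.isometry).hausdorffMeasure_image (d := (n : ℝ))
      (Or.inl (Nat.cast_nonneg n)) (Q '' K)
    rw [← h, image_image]
    congr 1
    apply image_congr
    intro x _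
    exact (hcoe x).symm
  rw [hproj]
  have hfinQ : ν (Q '' K) ≠ ⊤ := (hKc.image Q.continuous).measure_lt_top.ne
  set S : ℝ → Set (EuclideanSpace ℝ (Fin (n + 1))) :=
    fun m => sphProj (n + 1) ((fun x => x + m • v) '' K) with hS
  have hpos : ∀ m, R < m → ∀ x ∈ K, 0 < m + ⟪x, v⟫ := by
    intro m hm x hx
    have := abs_le.1 (hiv x)
    have := hR x hx
    linarith
  have hne : ∀ m, R < m → ∀ x ∈ K, x + m • v ≠ 0 := by
    intro m hm x hx h0
    have h := hpos m hm x hx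
    have : ⟪x + m • v, v⟫ = m + ⟪x, v⟫ := by
      rw [inner_add_left, inner_smul_left, hvv]; simp [add_comm]
    rw [← this, h0, inner_zero_left] at h
    exact lt_irrefl _ h
  have hSeq : ∀ m, R < m → S m = (fun x => ‖x + m • v‖⁻¹ • (x + m • v)) '' K := by
    intro m hm
    have : ((fun x => x + m • v) '' K) \ {0} = (fun x => x + m • v) '' K := by
      apply sdiff_singleton_eq_self
      rintro ⟨x, hx, h0⟩
      exact hne m hm x hx h0
    simp only [hS, sphProj]
    rw [this, image_image]
  have hlow : ∀ m, R < m → ν ((fun x => (m / ‖x + m • v‖) • Q x) '' K)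
      ≤ ENNReal.ofReal m ^ n * μH[(n : ℝ)] (S m) := by
    intro m hm
    have hm0 : 0 < m := hR0.trans hm
    have hL : LipschitzWith (Real.toNNReal m) (fun u => m • Q u) := by
      apply LipschitzWith.of_dist_le_mul
      intro a b
      rw [dist_eq_norm, dist_eq_norm, ← smul_sub, ← map_sub, norm_smul,
        Real.norm_of_nonneg hm0.le, Real.coe_toNNReal _ hm0.le]
      exact mul_le_mul_of_nonneg_left (hQn _) hm0.le
    have h := hL.hausdorffMeasure_image_le (d := (n : ℝ)) (Nat.cast_nonneg n) (S m)
    rw [ENNReal.rpow_natCast] at h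
    refine le_trans (le_of_eq ?_) h
    rw [hSeq m hm, image_image]
    congr 1
    apply image_congr
    intro x _
    rw [map_smul, map_add, map_smul, hQv, smul_zero, add_zero, smul_smul, div_eq_mul_inv]
  have hup : ∀ m, R < m → ENNReal.ofReal m ^ n * μH[(n : ℝ)] (S m)
      ≤ ν ((fun x => (m / (m + ⟪x, v⟫)) • Q x) '' K) := by
    intro m hm
    have hm0 : 0 < m := hR0.trans hm
    have hone : ∀ y : H, 1 ≤ ‖v + m⁻¹ • (y : EuclideanSpace ℝ (Fin (n + 1)))‖ := by
      intro y
      have h := hiv (v + m⁻¹ • (y : EuclideanSpace ℝ (Fin (n + 1))))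
      rw [inner_add_left, inner_smul_left, hvv, hyv] at h
      simpa using h
    have hL : LipschitzWith (Real.toNNReal m⁻¹) (fun y : H =>
        ‖v + m⁻¹ • (y : EuclideanSpace ℝ (Fin (n + 1)))‖⁻¹ •
          (v + m⁻¹ • (y : EuclideanSpace ℝ (Fin (n + 1))))) := by
      apply LipschitzWith.of_dist_le_mul
      intro a b
      rw [dist_eq_norm]
      refine (norm_normalize_sub_le (hone a) (hone b)).trans (le_of_eq ?_)
      rw [add_sub_add_left_eq_sub, ← smul_sub, norm_smul, Real.norm_of_nonneg (by positivity),
        Real.coe_toNNReal _ (by positivity), dist_eq_norm, Submodule.coe_norm, Submodule.coe_sub]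
    have h := hL.hausdorffMeasure_image_le (d := (n : ℝ)) (Nat.cast_nonneg n)
      ((fun x => (m / (m + ⟪x, v⟫)) • Q x) '' K)
    rw [ENNReal.rpow_natCast, image_image] at h
    have himg : (fun x => ‖v + m⁻¹ • (((m / (m + ⟪x, v⟫)) • Q x : H) :
          EuclideanSpace ℝ (Fin (n + 1)))‖⁻¹ •
          (v + m⁻¹ • (((m / (m + ⟪x, v⟫)) • Q x : H) : EuclideanSpace ℝ (Fin (n + 1))))) '' K
        = S m := by
      rw [hSeq m hm]
      apply image_congr
      intro x hx
      have hp := hpos m hm x hx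
      have e : v + m⁻¹ • (((m / (m + ⟪x, v⟫)) • Q x : H) : EuclideanSpace ℝ (Fin (n + 1)))
          = (m + ⟪x, v⟫)⁻¹ • (x + m • v) := by
        rw [Submodule.coe_smul, hcoe, smul_smul]
        have e1 : m⁻¹ * (m / (m + ⟪x, v⟫)) = (m + ⟪x, v⟫)⁻¹ := by field_simp
        have e2 : v = (m + ⟪x, v⟫)⁻¹ • ((m + ⟪x, v⟫) • v) := by
          rw [smul_smul, inv_mul_cancel₀ hp.ne', one_smul]
        rw [e1]
        nth_rewrite 1 [e2]
        rw [← smul_add, add_smul]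
        congr 1
        abel
      rw [e, norm_smul, norm_inv, Real.norm_of_nonneg hp.le, smul_smul]
      congr 1
      field_simp
    rw [himg] at h
    calc ENNReal.ofReal m ^ n * μH[(n : ℝ)] (S m)
        ≤ ENNReal.ofReal m ^ n * (ENNReal.ofReal m⁻¹ ^ n *
            ν ((fun x => (m / (m + ⟪x, v⟫)) • Q x) '' K)) := by gcongr; exact h
      _ = ν ((fun x => (m / (m + ⟪x, v⟫)) • Q x) '' K) := by
        rw [← mul_assoc, ← mul_pow, ← ENNReal.ofReal_mul hm0.le, mul_inv_cancel₀ hm0.ne']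
        simp
  have hlim : Tendsto (fun m => ENNReal.ofReal m ^ n * μH[(n : ℝ)] (S m)) atTop
      (𝓝 (ν (Q '' K))) := by
    refine tendsto_of_tendsto_of_tendsto_of_le_of_le' hP hG ?_ ?_
    · filter_upwards [eventually_gt_atTop R] with m hm using hlow m hm
    · filter_upwards [eventually_gt_atTop R] with m hm using hup m hm
  refine ((ENNReal.tendsto_toReal hfinQ).comp hlim).congr' ?_
  filter_upwards [eventually_gt_atTop R] with m hm
  simp only [Function.comp_apply]
  rw [ENNReal.toReal_mul, ENNReal.toReal_pow, ENNReal.toReal_ofReal (hR0.trans hm).le]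

theorem tendsto_area_sphProj_translate
    (d : ℕ) (K : Set (EuclideanSpace ℝ (Fin d))) (v : EuclideanSpace ℝ (Fin d))
    (hv : ‖v‖ = 1)
    (hKc : IsCompact K) (hKconv : Convex ℝ K) (hKint : (interior K).Nonempty) :
    Tendsto
      (fun μ : ℝ =>
        μ ^ (d - 1) * (μH[(d : ℝ) - 1] (sphProj d ((fun x => x + μ • v) '' K))).toReal)
      atTop (𝓝 (projVol d K v)) := by
  cases d with
  | zero =>
    have : v = 0 := Subsingleton.elim _ _
    simp [this] at hv
  | succ n =>
    have h := tendsto_area_aux n K v hv hKc hKconv hKint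
    have e : ((n + 1 : ℕ) : ℝ) - 1 = n := by push_cast; ring
    unfold projVol
    rw [e]
    exact h
end
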